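/- Let F be a field of characteristic zero, let V and V′ be finite-dimensional F-vector spaces with nilpotent endomorphisms N and N′, and let W, W′ be the weight filtrations on V, V′ centered at integers w, w′ associated to N, N′. Then the weight filtration on V ⊗ V′ centered at w + w′ associated to the nilpotent operator N ⊗ id + id ⊗ N′ is the tensor product filtration W ⊗ W′, defined by (W ⊗ W′)_i = Σ_{i₁+i₂=i} W_{i₁} ⊗ W′_{i₂} (the span in V ⊗ V′ of the images of the subspaces W_{i₁} ⊗ W′_{i₂}). -/

import Mathlib

open TensorProduct

/-- `W` is an ascending filtration on `V`, exhaustive and separated, which is the weight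
filtration centered at `w` associated to the nilpotent endomorphism `N`. -/
def IsWeightFiltration {F V : Type*} [Field F] [AddCommGroup V] [Module F V]
    (N : V →ₗ[F] V) (w : ℤ) (W : ℤ → Submodule F V) : Prop :=
  Monotone W ∧
  (∃ a : ℤ, ∀ i ≤ a, W i = ⊥) ∧
  (∃ b : ℤ, ∀ i, b ≤ i → W i = ⊤) ∧
  (∀ i : ℤ, (W i).map N ≤ W (i - 2)) ∧
  (∀ α : ℤ, 0 < α →
    W (w - α) ≤ W (w - α - 1) ⊔ (W (w + α)).map (N ^ α.toNat) ∧
    ∀ v ∈ W (w + α), (N ^ α.toNat) v ∈ W (w - α - 1) → v ∈ W (w + α - 1))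

/-!
The weight filtration is unique: the conditions determine `W (w + n - 1)` and `W (w - n)` from
`W (w + n)` and `W (w - n - 1)`, so two weight filtrations agree from the outside inwards.

It suffices to exhibit it. Using a Jordan basis, complete `N` to an `sl₂`-triple `(h, e, f = N)` in
which `h` is diagonalizable with integral eigenvalues. In characteristic zero `f ^ n` maps the
`n`-eigenspace of `h` bijectively onto the `-n`-eigenspace, so filtering `V` by the eigenvalues of
`h`, shifted by `w`, gives the weight filtration. Since `sl₂`-triples on `V` and `V'` add up to one
on `V ⊗ V'` whose eigenspaces are sums of tensor products of eigenspaces, this description is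
compatible with tensor products.
-/

section

variable {F V V' : Type*} [Field F] [AddCommGroup V] [Module F V] [AddCommGroup V'] [Module F V']

section Families

variable {ι : Type*}

/-- The ascending filtration `i ↦ ⨆ j ≤ i, E j` defined by a family of subspaces `E`, which is
usually a grading. -/
def gradingFiltration [Preorder ι] (E : ι → Submodule F V) (i : ι) : Submodule F V :=
  ⨆ j ≤ i, E j

theorem gradingFiltration_mono [Preorder ι] (E : ι → Submodule F V) :
    Monotone (gradingFiltration E) :=
  fun _ _ hij => biSup_mono fun _ hk => hk.trans hij

theorem le_gradingFiltration [Preorder ι] (E : ι → Submodule F V) {i j : ι} (hji : j ≤ i) :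
    E j ≤ gradingFiltration E i :=
  le_iSup₂_of_le j hji le_rfl

/-- The family `i ↦ ⨆ j, E j ⊗ E' (i - j)` in `V ⊗ V'`. This is the tensor product grading when
`E` and `E'` are gradings, and the tensor product filtration when they are filtrations. -/
def tensorFamily [AddCommGroup ι] (E : ι → Submodule F V) (E' : ι → Submodule F V') (i : ι) :
    Submodule F (V ⊗[F] V') :=
  ⨆ j, Submodule.map₂ (TensorProduct.mk F V V') (E j) (E' (i - j))

theorem map₂_le_tensorFamily [AddCommGroup ι] (E : ι → Submodule F V) (E' : ι → Submodule F V')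
    (i j : ι) :
    Submodule.map₂ (TensorProduct.mk F V V') (E i) (E' j) ≤ tensorFamily E E' (i + j) :=
  le_iSup_of_le i (by rw [add_sub_cancel_left])

theorem iSup_tensorFamily_eq_top [AddCommGroup ι] {E : ι → Submodule F V} {E' : ι → Submodule F V'}
    (hE : ⨆ i, E i = ⊤) (hE' : ⨆ i, E' i = ⊤) : ⨆ i, tensorFamily E E' i = ⊤ := by
  rw [eq_top_iff, ← TensorProduct.map₂_mk_top_top_eq_top, ← hE, ← hE', Submodule.map₂_iSup_left]
  simp only [Submodule.map₂_iSup_right]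
  exact iSup₂_le fun i j => (map₂_le_tensorFamily E E' i j).trans (le_iSup _ (i + j))

theorem tensorFamily_gradingFiltration [AddCommGroup ι] [PartialOrder ι] [IsOrderedAddMonoid ι]
    (E : ι → Submodule F V) (E' : ι → Submodule F V') :
    tensorFamily (gradingFiltration E) (gradingFiltration E') =
      gradingFiltration (tensorFamily E E') := by
  ext1 i
  apply le_antisymm
  · refine iSup_le fun j => ?_
    simp only [gradingFiltration, Submodule.map₂_iSup_left, Submodule.map₂_iSup_right]
    refine iSup₂_le fun b hb => iSup₂_le fun a ha => (map₂_le_tensorFamily E E' a b).trans ?_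
    exact le_gradingFiltration _ (by simpa using add_le_add ha hb)
  · refine iSup₂_le fun k hk => iSup_le fun j => le_iSup_of_le j ?_
    exact Submodule.map₂_le_map₂ (le_gradingFiltration E le_rfl)
      (le_gradingFiltration E' (sub_le_sub_right hk j))

end Families

theorem map_pow_le_of_map_le {N : V →ₗ[F] V} {E : ℤ → Submodule F V}
    (hN : ∀ i, (E i).map N ≤ E (i - 2)) (n : ℕ) (i : ℤ) :
    (E i).map (N ^ n) ≤ E (i - 2 * n) := by
  induction n with
  | zero => simp [Module.End.one_eq_id]
  | succ n ih =>
    calc (E i).map (N ^ (n + 1)) = ((E i).map (N ^ n)).map N := by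
          rw [pow_succ', Module.End.mul_eq_comp, Submodule.map_comp]
      _ ≤ (E (i - 2 * n)).map N := Submodule.map_mono ih
      _ ≤ E (i - 2 * n - 2) := hN _
      _ = E (i - 2 * (n + 1 : ℕ)) := by congr 1; push_cast; ring

namespace IsWeightFiltration

variable {N : V →ₗ[F] V} {w : ℤ} {W U : ℤ → Submodule F V}

theorem monotone (hW : IsWeightFiltration N w W) : Monotone W := hW.1

theorem map_pow_le (hW : IsWeightFiltration N w W) (n : ℕ) (i : ℤ) :
    (W i).map (N ^ n) ≤ W (i - 2 * n) :=
  map_pow_le_of_map_le hW.2.2.2.1 n i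

theorem le_sup_map_pow (hW : IsWeightFiltration N w W) {n : ℕ} (hn : 0 < n) :
    W (w - n) ≤ W (w - n - 1) ⊔ (W (w + n)).map (N ^ n) := by
  simpa using (hW.2.2.2.2 n (by exact_mod_cast hn)).1

theorem mem_of_pow_apply_mem (hW : IsWeightFiltration N w W) {n : ℕ} (hn : 0 < n) {v : V}
    (hv : v ∈ W (w + n)) (hNv : (N ^ n) v ∈ W (w - n - 1)) : v ∈ W (w + n - 1) :=
  (hW.2.2.2.2 n (by exact_mod_cast hn)).2 v hv (by simpa using hNv)

theorem le_of_eq_outside (hW : IsWeightFiltration N w W) (hU : IsWeightFiltration N w U) {n : ℕ}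
    (hn : 0 < n) (hupper : W (w + n) = U (w + n)) (hlower : W (w - n - 1) = U (w - n - 1)) :
    W (w + n - 1) ≤ U (w + n - 1) ∧ W (w - n) ≤ U (w - n) := by
  constructor
  · intro v hv
    refine hU.mem_of_pow_apply_mem hn (hupper ▸ hW.monotone (by lia) hv) (hlower ▸ ?_)
    exact hW.monotone (by lia) (hW.map_pow_le n _ (Submodule.mem_map_of_mem hv))
  · calc W (w - n) ≤ W (w - n - 1) ⊔ (W (w + n)).map (N ^ n) := hW.le_sup_map_pow hn
      _ = U (w - n - 1) ⊔ (U (w + n)).map (N ^ n) := by rw [hlower, hupper]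
      _ ≤ U (w - n) := sup_le (hU.monotone (by lia))
          ((hU.map_pow_le n _).trans (hU.monotone (by lia)))

theorem eventually_eq (hW : IsWeightFiltration N w W) (hU : IsWeightFiltration N w U) :
    ∃ m : ℕ, ∀ n : ℕ, m ≤ n → W (w + n) = U (w + n) ∧ W (w - n - 1) = U (w - n - 1) := by
  obtain ⟨-, ⟨a, hWa⟩, ⟨b, hWb⟩, -⟩ := hW
  obtain ⟨-, ⟨a', hUa⟩, ⟨b', hUb⟩, -⟩ := hU
  refine ⟨(max (max (b - w) (b' - w)) (max (w - a) (w - a'))).toNat, fun n hn => ?_⟩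
  rw [hWb _ (by lia), hUb _ (by lia), hWa _ (by lia), hUa _ (by lia)]
  exact ⟨rfl, rfl⟩

theorem unique (hW : IsWeightFiltration N w W) (hU : IsWeightFiltration N w U) : W = U := by
  obtain ⟨m, hm⟩ := hW.eventually_eq hU
  have hall (n : ℕ) : W (w + n) = U (w + n) ∧ W (w - n - 1) = U (w - n - 1) := by
    rcases le_total m n with hmn | hnm
    · exact hm n hmn
    · induction hnm using Nat.decreasingInduction with
      | self => exact hm m le_rfl
      | of_succ n _ ih =>
        have hWU := hW.le_of_eq_outside hU n.succ_pos ih.1 ih.2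
        have hUW := hU.le_of_eq_outside hW n.succ_pos ih.1.symm ih.2.symm
        have hupper := hWU.1.antisymm hUW.1
        have hlower := hWU.2.antisymm hUW.2
        rw [show w + (n.succ : ℤ) - 1 = w + n by push_cast; ring] at hupper
        rw [show w - (n.succ : ℤ) = w - n - 1 by push_cast; ring] at hlower
        exact ⟨hupper, hlower⟩
  ext1 i
  rcases le_or_gt w i with hi | hi
  · simpa [hi] using (hall (i - w).toNat).1
  · convert (hall (w - i - 1).toNat).2 using 2 <;> lia

end IsWeightFiltration

section Grading

variable {N : V →ₗ[F] V} {w : ℤ} {E : ℤ → Submodule F V}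

theorem gradingFiltration_eq_sup (E : ℤ → Submodule F V) (i : ℤ) :
    gradingFiltration E i = E i ⊔ gradingFiltration E (i - 1) := by
  apply le_antisymm
  · refine iSup₂_le fun j hj => ?_
    rcases hj.eq_or_lt with rfl | hlt
    · exact le_sup_left
    · exact le_sup_of_le_right (le_gradingFiltration E (by lia))
  · exact sup_le (le_gradingFiltration E le_rfl) (gradingFiltration_mono E (by lia))

theorem disjoint_gradingFiltration (hind : iSupIndep E) {i j : ℤ} (hij : i < j) :
    Disjoint (E j) (gradingFiltration E i) :=
  hind.disjoint_biSup (y := Set.Iic i) (by simpa using hij)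

theorem exists_gradingFiltration_eq_bot (hfin : {i | E i ≠ ⊥}.Finite) :
    ∃ a, ∀ i ≤ a, gradingFiltration E i = ⊥ := by
  obtain ⟨a, ha⟩ := hfin.bddBelow
  refine ⟨a - 1, fun i hi => iSup₂_eq_bot.mpr fun j hj => ?_⟩
  by_contra hne
  have := ha hne
  lia

theorem exists_gradingFiltration_eq_top (hfin : {i | E i ≠ ⊥}.Finite) (htop : ⨆ i, E i = ⊤) :
    ∃ b, ∀ i, b ≤ i → gradingFiltration E i = ⊤ := by
  obtain ⟨b, hb⟩ := hfin.bddAbove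
  refine ⟨b, fun i hi => eq_top_iff.mpr (htop ▸ iSup_le fun j => ?_)⟩
  by_cases hj : E j = ⊥
  · exact hj ▸ bot_le
  · exact le_gradingFiltration E ((hb hj).trans hi)

theorem map_gradingFiltration_le (hN : ∀ i, (E i).map N ≤ E (i - 2)) (i : ℤ) :
    (gradingFiltration E i).map N ≤ gradingFiltration E (i - 2) := by
  simp only [gradingFiltration, Submodule.map_iSup]
  exact iSup₂_le fun j hj => (hN j).trans (le_gradingFiltration E (by lia))

theorem mem_gradingFiltration_of_pow_apply_mem (hind : iSupIndep E)
    (hN : ∀ i, (E i).map N ≤ E (i - 2)) {n : ℕ}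
    (hinj : Set.InjOn (N ^ n) (E (w + n))) {v : V} (hv : v ∈ gradingFiltration E (w + n))
    (hNv : (N ^ n) v ∈ gradingFiltration E (w - n - 1)) :
    v ∈ gradingFiltration E (w + n - 1) := by
  rw [gradingFiltration_eq_sup, Submodule.mem_sup] at hv
  obtain ⟨x, hx, y, hy, rfl⟩ := hv
  have hNx : (N ^ n) x ∈ E (w - n) := by
    have := map_pow_le_of_map_le hN n _ (Submodule.mem_map_of_mem hx)
    rwa [show w + (n : ℤ) - 2 * n = w - n by ring] at this
  have hNy : (N ^ n) y ∈ gradingFiltration E (w - n - 1) :=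
    gradingFiltration_mono E (by lia) <|
      map_pow_le_of_map_le (map_gradingFiltration_le hN) n _ (Submodule.mem_map_of_mem hy)
  have hNx' : (N ^ n) x ∈ gradingFiltration E (w - n - 1) := by
    simpa using Submodule.sub_mem _ hNv hNy
  have hNx0 : (N ^ n) x = 0 :=
    Submodule.disjoint_def.mp (disjoint_gradingFiltration hind (by lia)) _ hNx hNx'
  have hx0 : x = 0 := hinj hx (zero_mem _) (by rw [hNx0, map_zero])
  rwa [hx0, zero_add]

theorem isWeightFiltration_gradingFiltration (hind : iSupIndep E) (htop : ⨆ i, E i = ⊤)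
    (hfin : {i | E i ≠ ⊥}.Finite) (hN : ∀ i, (E i).map N ≤ E (i - 2))
    (hbij : ∀ n : ℕ, Set.BijOn (N ^ n) (E (w + n)) (E (w - n))) :
    IsWeightFiltration N w (gradingFiltration E) := by
  refine ⟨gradingFiltration_mono E, exists_gradingFiltration_eq_bot hfin,
    exists_gradingFiltration_eq_top hfin htop, map_gradingFiltration_le hN, fun α hα => ?_⟩
  lift α to ℕ using hα.le
  rw [Int.toNat_natCast]
  refine ⟨?_, fun v => mem_gradingFiltration_of_pow_apply_mem hind hN (hbij α).injOn⟩
  rw [gradingFiltration_eq_sup E (w - α), sup_comm]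
  refine sup_le_sup_left ?_ _
  calc E (w - α) ≤ (E (w + α)).map (N ^ α) := (hbij α).surjOn
    _ ≤ (gradingFiltration E (w + α)).map (N ^ α) :=
        Submodule.map_mono (le_gradingFiltration E le_rfl)

end Grading

theorem eigenspace_neg (h : Module.End F V) (c : F) :
    Module.End.eigenspace (-h) c = Module.End.eigenspace h (-c) := by
  ext v
  simp [neg_eq_iff_eq_neg]

/-- The commutation relations of `sl₂` in an associative ring. Unlike in `IsSl2Triple`, the element
`h` may vanish, so that `f = 0` is allowed. -/
structure Sl2Relations {A : Type*} [Ring A] (h e f : A) : Prop where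
  e_mul_f : e * f = f * e + h
  h_mul_e : h * e = e * h + 2 • e
  h_mul_f : h * f = f * h - 2 • f

namespace Sl2Relations

theorem symm {A : Type*} [Ring A] {h e f : A} (t : Sl2Relations h e f) :
    Sl2Relations (-h) f e where
  e_mul_f := by rw [t.e_mul_f, add_neg_cancel_right]
  h_mul_e := by rw [neg_mul, t.h_mul_f, mul_neg]; abel
  h_mul_f := by rw [neg_mul, t.h_mul_e, mul_neg]; abel

open Module.End

variable {h e f : Module.End F V}

theorem e_f_apply (t : Sl2Relations h e f) (v : V) : e (f v) = f (e v) + h v :=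
  LinearMap.congr_fun t.e_mul_f v

theorem h_e_apply (t : Sl2Relations h e f) (v : V) : h (e v) = e (h v) + (2 : F) • e v := by
  simpa [two_smul] using LinearMap.congr_fun t.h_mul_e v

theorem h_f_apply (t : Sl2Relations h e f) (v : V) : h (f v) = f (h v) - (2 : F) • f v := by
  simpa [two_smul] using LinearMap.congr_fun t.h_mul_f v

theorem f_apply_mem_eigenspace (t : Sl2Relations h e f) {c : F} {v : V}
    (hv : v ∈ eigenspace h c) : f v ∈ eigenspace h (c - 2) := by
  rw [mem_eigenspace_iff] at hv ⊢
  rw [t.h_f_apply, hv, map_smul, sub_smul]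

theorem pow_f_apply_mem_eigenspace (t : Sl2Relations h e f) {c : F} {v : V}
    (hv : v ∈ eigenspace h c) (n : ℕ) : (f ^ n) v ∈ eigenspace h (c - 2 * n) := by
  induction n with
  | zero => simpa using hv
  | succ n ih =>
    rw [pow_succ', mul_apply]
    convert t.f_apply_mem_eigenspace ih using 2
    push_cast
    ring

theorem mapsTo_pow_f (t : Sl2Relations h e f) (n : ℕ) :
    Set.MapsTo (f ^ n) (eigenspace h (n : F)) (eigenspace h (-n : F)) := fun v hv => by
  have := t.pow_f_apply_mem_eigenspace hv n
  rwa [show (n : F) - 2 * n = -n by ring] at this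

theorem e_apply_mem_eigenspace (t : Sl2Relations h e f) {c : F} {v : V}
    (hv : v ∈ eigenspace h c) : e v ∈ eigenspace h (c + 2) := by
  rw [mem_eigenspace_iff] at hv ⊢
  rw [t.h_e_apply, hv, map_smul, add_smul]

theorem e_pow_f_apply (t : Sl2Relations h e f) {c : F} {v : V} (hv : v ∈ eigenspace h c) (n : ℕ) :
    e ((f ^ (n + 1)) v) = (f ^ (n + 1)) (e v) + ((n + 1) * (c - n)) • (f ^ n) v := by
  induction n with
  | zero => simp [t.e_f_apply, mem_eigenspace_iff.mp hv]
  | succ n ih =>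
    have hfv := mem_eigenspace_iff.mp (t.pow_f_apply_mem_eigenspace hv (n + 1))
    rw [pow_succ' f (n + 1), mul_apply, mul_apply, t.e_f_apply, ih, hfv, map_add, map_smul,
      ← mul_apply f (f ^ n), ← pow_succ']
    push_cast
    module

section CharZero

variable [CharZero F]

theorem eq_zero_of_e_apply_eq_zero (t : Sl2Relations h e f) {n m : ℕ} {v : V}
    (hv : v ∈ eigenspace h (n : F)) (hev : e v = 0) (hmn : m ≤ n) (hfv : (f ^ m) v = 0) :
    v = 0 := by
  induction m with
  | zero => simpa using hfv
  | succ m ih =>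
    have hsmul : (((m : F) + 1) * (n - m)) • (f ^ m) v = 0 := by
      simpa [hfv, hev] using (t.e_pow_f_apply hv m).symm
    have hcoeff : ((m : F) + 1) * (n - m) ≠ 0 :=
      mul_ne_zero (Nat.cast_add_one_ne_zero m)
        (sub_ne_zero.mpr (Nat.cast_injective.ne (Nat.lt_of_succ_le hmn).ne'))
    exact ih (by lia) ((smul_eq_zero.mp hsmul).resolve_left hcoeff)

-- If `f ^ n` kills `v`, then `f ^ (n + 2)` kills `e v`, which has weight `n + 2`. By induction on
-- the power of `e` killing `v`, this reduces to the case of a highest weight vector.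
theorem eq_zero_of_pow_f_apply_eq_zero (t : Sl2Relations h e f) {k n : ℕ} {v : V}
    (hv : v ∈ eigenspace h (n : F)) (hev : (e ^ k) v = 0) (hfv : (f ^ n) v = 0) : v = 0 := by
  induction k generalizing n v with
  | zero => simpa using hev
  | succ k ih =>
    have hfv_of_le (m : ℕ) (hm : n ≤ m) : (f ^ m) v = 0 := by
      rw [← Nat.sub_add_cancel hm, pow_add, mul_apply, hfv, map_zero]
    have hfev : (f ^ (n + 2)) (e v) = 0 := by
      simpa [hfv_of_le (n + 1) (by lia), hfv_of_le (n + 1 + 1) (by lia)] using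
        (t.e_pow_f_apply hv (n + 1)).symm
    have hev0 : e v = 0 :=
      ih (n := n + 2) (by exact_mod_cast t.e_apply_mem_eigenspace hv)
        (by rwa [pow_succ, mul_apply] at hev) hfev
    exact t.eq_zero_of_e_apply_eq_zero hv hev0 le_rfl hfv

variable [FiniteDimensional F V]

theorem exists_pow_f_apply_eq_zero (t : Sl2Relations h e f) {c : F} {v : V}
    (hv : v ∈ eigenspace h c) : ∃ k : ℕ, (f ^ k) v = 0 := by
  by_contra! hne
  have hinj : Function.Injective fun k : ℕ => c - 2 * (k : F) := fun k l hkl => by simpa using hkl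
  refine Set.infinite_of_injective_forall_mem hinj (fun k => ?_) h.finite_hasEigenvalue
  exact hasEigenvalue_of_hasEigenvector ⟨t.pow_f_apply_mem_eigenspace hv k, hne k⟩

theorem injOn_pow_f (t : Sl2Relations h e f) (n : ℕ) :
    Set.InjOn (f ^ n) (eigenspace h (n : F)) := by
  rw [← LinearMap.disjoint_ker_iff_injOn, Submodule.disjoint_def]
  intro v hv hfv
  have hv' : v ∈ eigenspace (-h) (-(n : F)) := by rwa [eigenspace_neg, neg_neg]
  obtain ⟨k, hk⟩ := t.symm.exists_pow_f_apply_eq_zero hv'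
  exact t.eq_zero_of_pow_f_apply_eq_zero hv hk hfv

theorem finrank_eigenspace_le (t : Sl2Relations h e f) (n : ℕ) :
    Module.finrank F (eigenspace h (n : F)) ≤ Module.finrank F (eigenspace h (-n : F)) :=
  LinearMap.finrank_le_finrank_of_injective (f := (f ^ n).restrict (t.mapsTo_pow_f n))
    ((t.mapsTo_pow_f n).restrict_inj.mpr (t.injOn_pow_f n))

theorem bijOn_pow_f (t : Sl2Relations h e f) (n : ℕ) :
    Set.BijOn (f ^ n) (eigenspace h (n : F)) (eigenspace h (-n : F)) := by
  refine ⟨t.mapsTo_pow_f n, t.injOn_pow_f n, ?_⟩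
  have hfinrank : Module.finrank F (eigenspace h (n : F)) =
      Module.finrank F (eigenspace h (-n : F)) :=
    (t.finrank_eigenspace_le n).antisymm <| by
      have hge := t.symm.finrank_eigenspace_le n
      rwa [eigenspace_neg, eigenspace_neg, neg_neg] at hge
  rw [← (t.mapsTo_pow_f n).restrict_surjective_iff]
  exact (LinearMap.injective_iff_surjective_of_finrank_eq_finrank hfinrank
    (f := (f ^ n).restrict (t.mapsTo_pow_f n))).mp
    ((t.mapsTo_pow_f n).restrict_inj.mpr (t.injOn_pow_f n))

end CharZero

end Sl2Relations

section WeightSpace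

/-- The eigenspace of `h` for the integral eigenvalue `i - w`: the weight space of degree `i` of the
grading whose center of symmetry is `w`. -/
def weightSpace (h : Module.End F V) (w i : ℤ) : Submodule F V :=
  Module.End.eigenspace h ((i - w : ℤ) : F)

theorem iSupIndep_weightSpace [CharZero F] (h : Module.End F V) (w : ℤ) :
    iSupIndep (weightSpace h w) :=
  h.eigenspaces_iSupIndep.comp (Int.cast_injective.comp (sub_left_injective (b := w)))

theorem Sl2Relations.isWeightFiltration [CharZero F] [FiniteDimensional F V]
    {h e f : Module.End F V} (t : Sl2Relations h e f) {w : ℤ} (htop : ⨆ i, weightSpace h w i = ⊤) :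
    IsWeightFiltration f w (gradingFiltration (weightSpace h w)) := by
  have hind := iSupIndep_weightSpace h w
  refine isWeightFiltration_gradingFiltration hind htop
    (WellFoundedGT.finite_ne_bot_of_iSupIndep hind) (fun i => ?_) (fun n => ?_)
  · rintro _ ⟨v, hv, rfl⟩
    have := t.f_apply_mem_eigenspace hv
    rwa [weightSpace, show ((i - 2 - w : ℤ) : F) = (i - w : ℤ) - 2 by push_cast; ring]
  · simpa [weightSpace] using t.bijOn_pow_f n

end WeightSpace

section KroneckerSum

/-- The Kronecker sum `a ⊗ id + id ⊗ a'` of two endomorphisms: the action of a Lie algebra element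
on the tensor product of two representations. -/
def kroneckerSum (a : Module.End F V) (a' : Module.End F V') : Module.End F (V ⊗[F] V') :=
  TensorProduct.map a LinearMap.id + TensorProduct.map LinearMap.id a'

@[simp]
theorem kroneckerSum_tmul (a : Module.End F V) (a' : Module.End F V') (v : V) (v' : V') :
    kroneckerSum a a' (v ⊗ₜ[F] v') = a v ⊗ₜ[F] v' + v ⊗ₜ[F] a' v' := by
  simp [kroneckerSum]

theorem Sl2Relations.kroneckerSum {h e f : Module.End F V} {h' e' f' : Module.End F V'}
    (t : Sl2Relations h e f) (t' : Sl2Relations h' e' f') :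
    Sl2Relations (kroneckerSum h h') (kroneckerSum e e') (kroneckerSum f f') where
  e_mul_f := TensorProduct.ext' fun v v' => by
    simp only [Module.End.mul_apply, LinearMap.add_apply, kroneckerSum_tmul, map_add, t.e_f_apply,
      t'.e_f_apply, TensorProduct.add_tmul, TensorProduct.tmul_add]
    abel
  h_mul_e := TensorProduct.ext' fun v v' => by
    simp only [Module.End.mul_apply, LinearMap.add_apply, kroneckerSum_tmul, map_add, t.h_e_apply,
      t'.h_e_apply, TensorProduct.add_tmul, TensorProduct.tmul_add, two_smul]
    abel
  h_mul_f := TensorProduct.ext' fun v v' => by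
    simp only [Module.End.mul_apply, LinearMap.sub_apply, LinearMap.add_apply, kroneckerSum_tmul,
      map_add, t.h_f_apply, t'.h_f_apply, TensorProduct.sub_tmul, TensorProduct.tmul_sub,
      TensorProduct.add_tmul, TensorProduct.tmul_add, two_smul]
    abel

theorem map₂_weightSpace_le (h : Module.End F V) (h' : Module.End F V') (w w' i j : ℤ) :
    Submodule.map₂ (TensorProduct.mk F V V') (weightSpace h w i) (weightSpace h' w' j) ≤
      weightSpace (kroneckerSum h h') (w + w') (i + j) := by
  refine Submodule.map₂_le.mpr fun v hv v' hv' => ?_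
  simp only [weightSpace, Module.End.mem_eigenspace_iff] at hv hv' ⊢
  rw [TensorProduct.mk_apply, kroneckerSum_tmul, hv, hv', TensorProduct.tmul_smul,
    ← TensorProduct.smul_tmul', ← add_smul]
  push_cast
  congr 1
  ring

-- The inclusions are equalities because the left sides span and the right sides are independent.
theorem tensorFamily_weightSpace [CharZero F] {h : Module.End F V} {h' : Module.End F V'}
    {w w' : ℤ} (htop : ⨆ i, weightSpace h w i = ⊤) (htop' : ⨆ i, weightSpace h' w' i = ⊤) :
    tensorFamily (weightSpace h w) (weightSpace h' w') =
      weightSpace (kroneckerSum h h') (w + w') := by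
  refine ((iSupIndep_weightSpace _ _).le_iff_eq_of_iSup_eq_top
    (iSup_tensorFamily_eq_top htop htop')).mp fun i => iSup_le fun j => ?_
  simpa using map₂_weightSpace_le h h' w w' j (i - j)

end KroneckerSum

section JordanBasis

open Polynomial DirectSum

theorem exists_basis_quotient_X_pow (F : Type*) [Field F] (k : ℕ) :
    ∃ b : Module.Basis (Fin k) F (F[X] ⧸ F[X] ∙ (X ^ k : F[X])),
      ∀ j, b j = Submodule.Quotient.mk (X ^ (j : ℕ)) := by
  let pb := AdjoinRoot.powerBasis' (monic_X_pow (R := F) k)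
  have hdim : pb.dim = k := by simp [pb]
  refine ⟨pb.basis.reindex (finCongr hdim), fun j => ?_⟩
  calc pb.basis.reindex (finCongr hdim) j = pb.gen ^ (j : ℕ) := by simp
    _ = AdjoinRoot.mk (X ^ k) (X ^ (j : ℕ)) := by simp [pb]

theorem exists_linearEquiv_pi_quotient_X_pow [FiniteDimensional F V] {N : Module.End F V}
    (hN : IsNilpotent N) :
    ∃ (d : ℕ) (k : Fin d → ℕ) (φ : V ≃ₗ[F] ∀ i, F[X] ⧸ F[X] ∙ (X ^ k i : F[X])),
      ∀ v, φ (N v) = (X : F[X]) • φ v := by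
  classical
  obtain ⟨n, hn⟩ := hN
  have htorsion : Module.IsTorsion' (Module.AEval' N) (Submonoid.powers (X : F[X])) := by
    rw [Submodule.isTorsion'_powers_iff]
    intro x
    obtain ⟨v, rfl⟩ := (Module.AEval'.of N).surjective x
    exact ⟨n, by rw [Module.AEval'.X_pow_smul_of, hn]; simp⟩
  obtain ⟨d, k, ⟨φ⟩⟩ := Module.torsion_by_prime_power_decomposition irreducible_X htorsion
  let ψ := φ.trans (DirectSum.linearEquivFunOnFintype F[X] (Fin d) _)
  refine ⟨d, k, (Module.AEval'.of N).trans (ψ.restrictScalars F), fun v => ?_⟩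
  calc ψ (Module.AEval'.of N (N v)) = ψ ((X : F[X]) • Module.AEval'.of N v) := by
        rw [Module.AEval'.X_smul_of]
    _ = (X : F[X]) • ψ (Module.AEval'.of N v) := map_smul ψ _ _

/-- The basis `b` consists of the Jordan chains `v i, N (v i), …, N ^ (k i - 1) (v i)` of the
nilpotent endomorphism `N`, the chain of index `i` having length `k i`. -/
structure IsJordanBasis {ι : Type*} {k : ι → ℕ} (N : Module.End F V)
    (b : Module.Basis (Σ i, Fin (k i)) F V) (v : ι → V) : Prop where
  apply_mk : ∀ (i : ι) (j : Fin (k i)), b ⟨i, j⟩ = (N ^ (j : ℕ)) (v i)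
  pow_apply : ∀ i, (N ^ k i) (v i) = 0

theorem exists_isJordanBasis [FiniteDimensional F V] {N : Module.End F V} (hN : IsNilpotent N) :
    ∃ (d : ℕ) (k : Fin d → ℕ) (b : Module.Basis (Σ i, Fin (k i)) F V) (v : Fin d → V),
      IsJordanBasis N b v := by
  obtain ⟨d, k, φ, hφ⟩ := exists_linearEquiv_pi_quotient_X_pow hN
  choose c hc using fun i => exists_basis_quotient_X_pow F (k i)
  have hφ_pow (j : ℕ) (v : V) : φ ((N ^ j) v) = (X ^ j : F[X]) • φ v := by
    induction j with
    | zero => simp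
    | succ j ih => rw [pow_succ', Module.End.mul_apply, hφ, ih, smul_smul, ← pow_succ']
  let v (i : Fin d) : V := φ.symm (Pi.single i (Submodule.Quotient.mk 1))
  have hφv (i : Fin d) (j : ℕ) :
      φ ((N ^ j) (v i)) = Pi.single i (Submodule.Quotient.mk (X ^ j)) := by
    rw [hφ_pow, LinearEquiv.apply_symm_apply, ← Pi.single_smul, ← Submodule.Quotient.mk_smul,
      smul_eq_mul, mul_one]
  refine ⟨d, k, (Pi.basis c).map φ.symm, v, fun i j => φ.injective ?_, fun i => φ.injective ?_⟩
  · rw [hφv, Module.Basis.map_apply, LinearEquiv.apply_symm_apply, Pi.basis_apply, hc]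
  · rw [hφv, (Submodule.Quotient.mk_eq_zero _).mpr (Submodule.mem_span_singleton_self _),
      Pi.single_zero, map_zero]

end JordanBasis

section Completion

variable {ι : Type*} {k : ι → ℕ} {N : Module.End F V} {b : Module.Basis (Σ i, Fin (k i)) F V}
  {v : ι → V}

/-- The semisimple element `h` of the `sl₂`-triple of a Jordan basis: along a chain of length `k`
its eigenvalues are `k - 1, k - 3, …, 1 - k`. -/
noncomputable def jordanWeight (b : Module.Basis (Σ i, Fin (k i)) F V) : Module.End F V :=
  b.constr F fun p => ((k p.1 : F) - 1 - 2 * (p.2 : ℕ)) • b p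

/-- The raising operator `e` of the `sl₂`-triple of a Jordan basis. The coefficient `j * (k - j)`
is the sum of the eigenvalues of `jordanWeight` on the first `j` vectors of a chain of length `k`;
it vanishes for `j = 0`, where the index `j - 1` is truncated. -/
noncomputable def jordanRaising (b : Module.Basis (Σ i, Fin (k i)) F V) : Module.End F V :=
  b.constr F fun p =>
    ((p.2 : ℕ) * ((k p.1 : F) - (p.2 : ℕ))) • b ⟨p.1, p.2 - 1, by lia⟩

namespace IsJordanBasis

theorem pow_apply_of_le (hb : IsJordanBasis N b v) {i : ι} {j : ℕ} (hj : k i ≤ j) :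
    (N ^ j) (v i) = 0 := by
  rw [← Nat.sub_add_cancel hj, pow_add, Module.End.mul_apply, hb.pow_apply, map_zero]

theorem jordanWeight_pow_apply (hb : IsJordanBasis N b v) (i : ι) (j : ℕ) :
    jordanWeight b ((N ^ j) (v i)) = ((k i : F) - 1 - 2 * j) • (N ^ j) (v i) := by
  rcases lt_or_ge j (k i) with hj | hj
  · rw [← hb.apply_mk i ⟨j, hj⟩, jordanWeight, Module.Basis.constr_basis]
  · rw [hb.pow_apply_of_le hj, map_zero, smul_zero]

theorem jordanRaising_pow_apply (hb : IsJordanBasis N b v) (i : ι) (j : ℕ) :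
    jordanRaising b ((N ^ j) (v i)) = (j * ((k i : F) - j)) • (N ^ (j - 1)) (v i) := by
  rcases lt_trichotomy j (k i) with hj | rfl | hj
  · rw [← hb.apply_mk i ⟨j, hj⟩, jordanRaising, Module.Basis.constr_basis, hb.apply_mk]
  · rw [hb.pow_apply, map_zero, sub_self, mul_zero, zero_smul]
  · rw [hb.pow_apply_of_le hj.le, hb.pow_apply_of_le (by lia), map_zero, smul_zero]

theorem end_ext (hb : IsJordanBasis N b v) {φ ψ : Module.End F V}
    (h : ∀ i (j : ℕ), φ ((N ^ j) (v i)) = ψ ((N ^ j) (v i))) : φ = ψ :=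
  b.ext fun ⟨i, j⟩ => by rw [hb.apply_mk, h]

theorem sl2Relations (hb : IsJordanBasis N b v) :
    Sl2Relations (jordanWeight b) (jordanRaising b) N := by
  have hN_pow (i : ι) (j : ℕ) : N ((N ^ j) (v i)) = (N ^ (j + 1)) (v i) := by
    rw [pow_succ', Module.End.mul_apply]
  refine ⟨hb.end_ext fun i j => ?_, hb.end_ext fun i j => ?_, hb.end_ext fun i j => ?_⟩
  · simp only [Module.End.mul_apply, LinearMap.add_apply, hN_pow, hb.jordanRaising_pow_apply,
      hb.jordanWeight_pow_apply, map_smul]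
    cases j <;> simp only [Nat.add_sub_cancel] <;> push_cast <;> module
  · simp only [Module.End.mul_apply, LinearMap.add_apply, two_smul, hb.jordanRaising_pow_apply,
      hb.jordanWeight_pow_apply, map_smul]
    cases j with
    | zero => simp
    | succ j =>
      simp only [Nat.add_sub_cancel]
      push_cast
      module
  · simp only [Module.End.mul_apply, LinearMap.sub_apply, LinearMap.add_apply, two_smul, hN_pow,
      hb.jordanWeight_pow_apply, map_smul]
    push_cast
    module

theorem iSup_weightSpace_jordanWeight (hb : IsJordanBasis N b v) (w : ℤ) :
    ⨆ i, weightSpace (jordanWeight b) w i = ⊤ := by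
  rw [eq_top_iff, ← b.span_eq, Submodule.span_le]
  rintro _ ⟨⟨i, j⟩, rfl⟩
  refine Submodule.mem_iSup_of_mem (w + (k i - 1 - 2 * (j : ℕ))) ?_
  rw [weightSpace, Module.End.mem_eigenspace_iff, hb.apply_mk, hb.jordanWeight_pow_apply]
  push_cast
  congr 1
  ring

end IsJordanBasis

theorem exists_sl2Relations [FiniteDimensional F V] {N : Module.End F V} (hN : IsNilpotent N) :
    ∃ h e : Module.End F V, Sl2Relations h e N ∧ ∀ w, ⨆ i, weightSpace h w i = ⊤ := by
  obtain ⟨_, _, b, _, hb⟩ := exists_isJordanBasis hN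
  exact ⟨jordanWeight b, jordanRaising b, hb.sl2Relations, hb.iSup_weightSpace_jordanWeight⟩

end Completion

end

/-- Let `W`, `W'` be the weight filtrations centered at `w`, `w'` associated to nilpotent
endomorphisms `N`, `N'` of finite dimensional vector spaces `V`, `V'` over a field of
characteristic zero. Then the weight filtration on `V ⊗ V'` centered at `w + w'`
associated to the nilpotent operator `N ⊗ id + id ⊗ N'` is the tensor product filtration
`(W ⊗ W')_i = Σ_{i₁ + i₂ = i} W_{i₁} ⊗ W'_{i₂}`. -/
theorem weightFiltration_tensor
    (F V V' : Type*) [Field F] [CharZero F]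
    [AddCommGroup V] [Module F V] [FiniteDimensional F V]
    [AddCommGroup V'] [Module F V'] [FiniteDimensional F V']
    (N : V →ₗ[F] V) (hN : IsNilpotent N) (w : ℤ) (W : ℤ → Submodule F V)
    (hW : IsWeightFiltration N w W)
    (N' : V' →ₗ[F] V') (hN' : IsNilpotent N') (w' : ℤ) (W' : ℤ → Submodule F V')
    (hW' : IsWeightFiltration N' w' W') :
    IsWeightFiltration
      (TensorProduct.map N LinearMap.id + TensorProduct.map LinearMap.id N')
      (w + w')
      (fun i : ℤ =>
        ⨆ j : ℤ, Submodule.map₂ (TensorProduct.mk F V V') (W j) (W' (i - j))) := by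
  obtain ⟨h, e, t, htop⟩ := exists_sl2Relations hN
  obtain ⟨h', e', t', htop'⟩ := exists_sl2Relations hN'
  have hW_eq := hW.unique (t.isWeightFiltration (htop w))
  have hW'_eq := hW'.unique (t'.isWeightFiltration (htop' w'))
  have hgrading := tensorFamily_weightSpace (htop w) (htop' w')
  have hfiltration : tensorFamily W W' =
      gradingFiltration (weightSpace (kroneckerSum h h') (w + w')) := by
    rw [hW_eq, hW'_eq, tensorFamily_gradingFiltration, hgrading]
  change IsWeightFiltration (kroneckerSum N N') (w + w') (tensorFamily W W')
  rw [hfiltration]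
  refine (t.kroneckerSum t').isWeightFiltration ?_
  rw [← hgrading, iSup_tensorFamily_eq_top (htop w) (htop' w')]
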